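/- arXiv:2207.14555 — 2 statements merged into one kernel-verified Lean document; each statement's English description precedes it below -/
import Mathlib

section
/- Piecewise-linear approximation of the rescaled drift path in probability (equation (C.1) of Appendix C): define, for ε ∈ (0,1), the path w^ε(ω)(t) = ε ∫_0^{t/ε²} b(ω,s) ds and the partial sums S(ω)(n) = ∫_0^n b(ω,s) ds for integers n ≥ 0. Then for every T > 0 and every η > 0, P( sup_{t ∈ [0,T]} | w^ε(ω)(t) − ε S(ω)(⌊t/ε²⌋) | > η ) → 0 as ε → 0; that is, sup_{t∈[0,T]} |w^ε − εS(⌊·/ε²⌋)| converges to 0 in probability. -/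
open MeasureTheory Filter Topology

noncomputable section

lemma rdaux_pt {a x p : ℝ} (ha : 0 < a) (hx : 0 ≤ x) (hp : 1 ≤ p) :
    x ≤ a + a / a ^ p * x ^ p := by
  have hap : 0 < a ^ p := Real.rpow_pos_of_pos ha p
  have hxp : 0 ≤ x ^ p := Real.rpow_nonneg hx p
  rcases le_total x a with h | h
  · have : 0 ≤ a / a ^ p * x ^ p := by positivity
    linarith
  · have hx0 : 0 < x := lt_of_lt_of_le ha h
    have h1 : x / a ≤ (x / a) ^ p :=
      Real.self_le_rpow_of_one_le ((one_le_div ha).2 h) hp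
    rw [Real.div_rpow hx ha.le] at h1
    have h2 : x = a * (x / a) := by field_simp
    have h3 : a * (x / a) ≤ a * (x ^ p / a ^ p) := mul_le_mul_of_nonneg_left h1 ha.le
    have h4 : a / a ^ p * x ^ p = a * (x ^ p / a ^ p) := by ring
    linarith

/-- On a unit interval, finiteness of the `p`-moment gives integrability and a bound. -/
lemma rdaux_int {E : Type*} [NormedAddCommGroup E] {f : ℝ → E}
    (hf : StronglyMeasurable f) {p : ℝ} (hp : 1 ≤ p) (n : ℕ)
    (hfin : ∫⁻ s in Set.Ioc (n : ℝ) (n + 1), ENNReal.ofReal (‖f s‖ ^ p) ≠ ⊤) :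
    IntegrableOn f (Set.Ioc (n : ℝ) (n + 1)) ∧
    ∀ a : ℝ, 0 < a → ∫⁻ s in Set.Ioc (n : ℝ) (n + 1), ENNReal.ofReal (‖f s‖ ^ p)
        < ENNReal.ofReal (a ^ p) →
      ∫ s in Set.Ioc (n : ℝ) (n + 1), ‖f s‖ ≤ 2 * a := by
  have hm : AEStronglyMeasurable (fun s => ‖f s‖ ^ p)
      (volume.restrict (Set.Ioc (n : ℝ) (n + 1))) :=
    (hf.norm.measurable.pow_const p).aestronglyMeasurable
  have hnn : ∀ s, 0 ≤ ‖f s‖ ^ p := fun s => Real.rpow_nonneg (norm_nonneg _) p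
  have hI : IntegrableOn (fun s => ‖f s‖ ^ p) (Set.Ioc (n : ℝ) (n + 1)) := by
    refine ⟨hm, ?_⟩
    rw [hasFiniteIntegral_iff_ofReal (Eventually.of_forall hnn)]
    exact lt_top_iff_ne_top.2 hfin
  have hdom : ∀ a : ℝ, IntegrableOn (fun s => a + a / a ^ p * ‖f s‖ ^ p)
      (Set.Ioc (n : ℝ) (n + 1)) := fun a =>
    (integrableOn_const (by simp)).add (hI.const_mul _)
  have hF : IntegrableOn f (Set.Ioc (n : ℝ) (n + 1)) := by
    refine Integrable.mono' (hdom 1) hf.aestronglyMeasurable (Eventually.of_forall fun s => ?_)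
    exact rdaux_pt one_pos (norm_nonneg _) hp
  refine ⟨hF, fun a ha hlt => ?_⟩
  have hap : 0 < a ^ p := Real.rpow_pos_of_pos ha p
  rw [← ofReal_integral_eq_lintegral_ofReal hI (Eventually.of_forall hnn),
    ENNReal.ofReal_lt_ofReal_iff hap] at hlt
  calc ∫ s in Set.Ioc (n : ℝ) (n + 1), ‖f s‖
      ≤ ∫ s in Set.Ioc (n : ℝ) (n + 1), (a + a / a ^ p * ‖f s‖ ^ p) :=
        integral_mono hF.norm (hdom a) fun s => rdaux_pt ha (norm_nonneg _) hp
    _ = a + a / a ^ p * ∫ s in Set.Ioc (n : ℝ) (n + 1), ‖f s‖ ^ p := by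
        rw [integral_add (integrable_const a) (hI.const_mul _), integral_const_mul]
        simp
    _ ≤ a + a / a ^ p * a ^ p := by gcongr
    _ = 2 * a := by field_simp; ring

/-- Deterministic bound on the supremum. -/
lemma rdaux_sup {E : Type*} [NormedAddCommGroup E] [NormedSpace ℝ E] {f : ℝ → E}
    (hf : StronglyMeasurable f) {p : ℝ} (hp : 1 ≤ p)
    (hfin : ∀ n : ℕ, ∫⁻ s in Set.Ioc (n : ℝ) (n + 1), ENNReal.ofReal (‖f s‖ ^ p) ≠ ⊤)
    {T η ε : ℝ} (hη : 0 < η) (hε : 0 < ε)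
    (hlt : ∀ n ∈ Finset.range (⌊T / ε ^ 2⌋₊ + 1),
      ∫⁻ s in Set.Ioc (n : ℝ) (n + 1), ENNReal.ofReal (‖f s‖ ^ p)
        < ENNReal.ofReal ((η / (2 * ε)) ^ p)) :
    (⨆ t ∈ Set.Icc (0 : ℝ) T,
      ‖(ε • ∫ s in (0 : ℝ)..(t / ε ^ 2), f s) -
        ε • ∫ s in (0 : ℝ)..((⌊t / ε ^ 2⌋ : ℤ) : ℝ), f s‖) ≤ η := by
  refine Real.iSup_le (fun t => Real.iSup_le (fun ht => ?_) hη.le) hη.le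
  have hx0 : 0 ≤ t / ε ^ 2 := div_nonneg ht.1 (by positivity)
  obtain ⟨n, hn⟩ : ∃ n : ℕ, n = ⌊t / ε ^ 2⌋₊ := ⟨_, rfl⟩
  have hfl : ((⌊t / ε ^ 2⌋ : ℤ) : ℝ) = n := by
    rw [hn]; exact (natCast_floor_eq_intCast_floor hx0).symm
  have hnle : (n : ℝ) ≤ t / ε ^ 2 := by rw [hn]; exact Nat.floor_le hx0
  have hltn : t / ε ^ 2 < n + 1 := by rw [hn]; exact Nat.lt_floor_add_one _
  have hmem : n ∈ Finset.range (⌊T / ε ^ 2⌋₊ + 1) := by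
    rw [Finset.mem_range, Nat.lt_succ_iff, hn]
    exact Nat.floor_mono (div_le_div_of_nonneg_right ht.2 (by positivity))
  have hII : ∀ k : ℕ, IntervalIntegrable f volume (k : ℝ) ((k + 1 : ℕ) : ℝ) := fun k => by
    rw [intervalIntegrable_iff_integrableOn_Ioc_of_le (by simp)]
    push_cast
    exact (rdaux_int hf hp k (hfin k)).1
  have h0n : ∀ k : ℕ, IntervalIntegrable f volume 0 (k : ℝ) := fun k => by
    have := IntervalIntegrable.trans_iterate (a := fun k : ℕ => (k : ℝ)) (n := k)
      (fun j _ => hII j)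
    simpa using this
  have hnx : IntervalIntegrable f volume (n : ℝ) (t / ε ^ 2) := by
    rw [intervalIntegrable_iff_integrableOn_Ioc_of_le hnle]
    exact (rdaux_int hf hp n (hfin n)).1.mono_set (Set.Ioc_subset_Ioc_right hltn.le)
  rw [hfl, ← smul_sub, intervalIntegral.integral_interval_sub_left ((h0n n).trans hnx) (h0n n),
    norm_smul, Real.norm_of_nonneg hε.le]
  have hb := (rdaux_int hf hp n (hfin n)).2 (η / (2 * ε)) (by positivity) (hlt n hmem)
  have h1 : ‖∫ s in (n : ℝ)..(t / ε ^ 2), f s‖ ≤ ∫ s in Set.Ioc (n : ℝ) (n + 1), ‖f s‖ := by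
    refine (intervalIntegral.norm_integral_le_integral_norm hnle).trans ?_
    rw [intervalIntegral.integral_of_le hnle]
    exact setIntegral_mono_set (rdaux_int hf hp n (hfin n)).1.norm
      (Eventually.of_forall fun s => norm_nonneg _)
      (Set.Ioc_subset_Ioc_right hltn.le).eventuallyLE
  calc ε * ‖∫ s in (n : ℝ)..(t / ε ^ 2), f s‖ ≤ ε * (2 * (η / (2 * ε))) := by
        gcongr; exact h1.trans hb
    _ = η := by field_simp

lemma rdaux_lim {δ T C c : ℝ} (hδ : 0 < δ) :
    Tendsto (fun ε : ℝ => ENNReal.ofReal ((T * ε ^ δ + ε ^ (2 + δ)) * (C / c)))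
      (𝓝[Set.Ioo (0 : ℝ) 1] 0) (𝓝 0) := by
  have h : ContinuousAt (fun ε : ℝ => ENNReal.ofReal ((T * ε ^ δ + ε ^ (2 + δ)) * (C / c))) 0 := by
    refine ENNReal.continuous_ofReal.continuousAt.comp ?_
    refine ContinuousAt.mul (ContinuousAt.add (continuousAt_const.mul ?_) ?_) continuousAt_const
    · exact Real.continuousAt_rpow_const _ _ (Or.inr hδ.le)
    · exact Real.continuousAt_rpow_const _ _ (Or.inr (by linarith))
  have h2 := h.tendsto.mono_left (nhdsWithin_le_nhds (s := Set.Ioo (0 : ℝ) 1))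
  simpa [Real.zero_rpow hδ.ne', Real.zero_rpow (show (2 + δ) ≠ 0 by linarith)] using h2


/-- equation (C.1) of Appendix C: with `w^ε(ω)(t) = ε ∫_0^{t/ε²} b(ω,s) ds`
and `S(ω)(n) = ∫_0^n b(ω,s) ds`, for every `T > 0` and `η > 0`,
`P(sup_{t ∈ [0,T]} |w^ε(ω)(t) − ε S(ω)(⌊t/ε²⌋)| > η) → 0` as `ε → 0`;
here `b(ω,s) = β(τ_s ω)`. -/
theorem rescaled_drift_piecewise_linear_approximation
    {d : ℕ} (hd : 1 ≤ d) (δ : ℝ) (hδ : δ ∈ Set.Ioo (0 : ℝ) 1)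
    {Ω : Type*} [MeasurableSpace Ω] (P : Measure Ω) [IsProbabilityMeasure P]
    (τ : ℝ → Ω → Ω)
    (hτ0 : τ 0 = id)
    (hτgrp : ∀ t s : ℝ, τ t ∘ τ s = τ (t + s))
    (hτmeas : Measurable fun p : ℝ × Ω => τ p.1 p.2)
    (hτmp : ∀ t : ℝ, MeasurePreserving (τ t) P P)
    (β : Ω → EuclideanSpace ℝ (Fin d)) (hβmeas : Measurable β)
    (hβint : Integrable (fun ω => ‖β ω‖ ^ ((2 : ℝ) + δ)) P) :
    ∀ T : ℝ, 0 < T → ∀ η : ℝ, 0 < η →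
      Tendsto
        (fun ε : ℝ => P {ω | η <
          ⨆ t ∈ Set.Icc (0 : ℝ) T,
            ‖(ε • ∫ s in (0 : ℝ)..(t / ε ^ 2), β (τ s ω)) -
              ε • ∫ s in (0 : ℝ)..((⌊t / ε ^ 2⌋ : ℤ) : ℝ), β (τ s ω)‖})
        (𝓝[Set.Ioo (0 : ℝ) 1] 0) (𝓝 0) := by
  intro T hT η hη
  have hδ0 : 0 < δ := hδ.1
  have hp : (1 : ℝ) ≤ 2 + δ := by linarith
  set C : ℝ := ∫ ω, ‖β ω‖ ^ ((2 : ℝ) + δ) ∂P with hC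
  have hC0 : 0 ≤ C := integral_nonneg fun ω => Real.rpow_nonneg (norm_nonneg _) _
  have hφm : Measurable fun ω => ENNReal.ofReal (‖β ω‖ ^ ((2 : ℝ) + δ)) :=
    (hβmeas.norm.pow_const _).ennreal_ofReal
  have hφ : ∫⁻ ω, ENNReal.ofReal (‖β ω‖ ^ ((2 : ℝ) + δ)) ∂P = ENNReal.ofReal C :=
    (ofReal_integral_eq_lintegral_ofReal hβint
      (Eventually.of_forall fun ω => Real.rpow_nonneg (norm_nonneg _) _)).symm
  have hjoint : Measurable fun q : Ω × ℝ =>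
      ENNReal.ofReal (‖β (τ q.2 q.1)‖ ^ ((2 : ℝ) + δ)) :=
    hφm.comp (hτmeas.comp measurable_swap)
  have hbm : ∀ ω, StronglyMeasurable fun s => β (τ s ω) := fun ω =>
    (hβmeas.comp (hτmeas.comp measurable_prodMk_right)).stronglyMeasurable
  obtain ⟨Z, hZ⟩ : ∃ Z : ℕ → Ω → ENNReal, Z = fun (n : ℕ) ω =>
    ∫⁻ s in Set.Ioc (n : ℝ) (n + 1), ENNReal.ofReal (‖β (τ s ω)‖ ^ ((2 : ℝ) + δ)) := ⟨_, rfl⟩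
  have hZm : ∀ n, Measurable (Z n) := fun n => by
    rw [hZ]
    exact hjoint.lintegral_prod_right'
  have hZi : ∀ n, ∫⁻ ω, Z n ω ∂P = ENNReal.ofReal C := fun n => by
    rw [hZ]
    simp only
    rw [lintegral_lintegral_swap hjoint.aemeasurable]
    have : ∀ s : ℝ, ∫⁻ ω, ENNReal.ofReal (‖β (τ s ω)‖ ^ ((2 : ℝ) + δ)) ∂P
        = ENNReal.ofReal C := fun s => by
      rw [← hφ]
      exact (hτmp s).lintegral_comp hφm
    simp [this]
  have hfin : ∀ᵐ ω ∂P, ∀ n, Z n ω ≠ ⊤ := by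
    rw [ae_all_iff]
    intro n
    filter_upwards [ae_lt_top (hZm n) (by rw [hZi]; exact ENNReal.ofReal_ne_top)] with ω h
    exact h.ne
  refine tendsto_of_tendsto_of_tendsto_of_le_of_le' tendsto_const_nhds
    (rdaux_lim (T := T) (C := C) (c := (η / 2) ^ ((2 : ℝ) + δ)) hδ0)
    (Eventually.of_forall fun _ => bot_le) ?_
  filter_upwards [self_mem_nhdsWithin] with ε hε
  have hε0 : 0 < ε := hε.1
  have hap : 0 < (η / (2 * ε)) ^ ((2 : ℝ) + δ) := Real.rpow_pos_of_pos (by positivity) _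
  calc _ ≤ P (⋃ n ∈ Finset.range (⌊T / ε ^ 2⌋₊ + 1),
        {ω | ENNReal.ofReal ((η / (2 * ε)) ^ ((2 : ℝ) + δ)) ≤ Z n ω}) := by
        refine measure_mono_ae ?_
        filter_upwards [hfin] with ω hω hmem
        by_contra hcon
        have hcon' : ∀ n ∈ Finset.range (⌊T / ε ^ 2⌋₊ + 1),
            Z n ω < ENNReal.ofReal ((η / (2 * ε)) ^ ((2 : ℝ) + δ)) := by
          intro n hn
          by_contra hge
          exact hcon (Set.mem_biUnion (Finset.mem_coe.2 hn) (not_lt.1 hge))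
        rw [hZ] at hcon' hω
        have hle := rdaux_sup (hbm ω) hp hω (T := T) hη hε0 hcon'
        exact absurd hmem (not_lt.2 hle)
    _ ≤ ∑ n ∈ Finset.range (⌊T / ε ^ 2⌋₊ + 1),
        P {ω | ENNReal.ofReal ((η / (2 * ε)) ^ ((2 : ℝ) + δ)) ≤ Z n ω} :=
        measure_biUnion_finset_le _ _
    _ ≤ ∑ n ∈ Finset.range (⌊T / ε ^ 2⌋₊ + 1),
        ENNReal.ofReal (C / (η / (2 * ε)) ^ ((2 : ℝ) + δ)) := by
        refine Finset.sum_le_sum fun n _ => ?_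
        rw [ENNReal.ofReal_div_of_pos hap, ← hZi n]
        exact meas_ge_le_lintegral_div (hZm n).aemeasurable
          (ENNReal.ofReal_pos.2 hap).ne' ENNReal.ofReal_ne_top
    _ = ENNReal.ofReal ((⌊T / ε ^ 2⌋₊ + 1) * (C / (η / (2 * ε)) ^ ((2 : ℝ) + δ))) := by
        rw [Finset.sum_const, Finset.card_range, nsmul_eq_mul,
          ENNReal.ofReal_mul (by positivity)]
        congr 1
        rw [← Nat.cast_succ, ENNReal.ofReal_natCast]
    _ ≤ ENNReal.ofReal ((T / ε ^ 2 + 1) * (C / (η / (2 * ε)) ^ ((2 : ℝ) + δ))) := by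
        apply ENNReal.ofReal_le_ofReal
        gcongr
        exact Nat.floor_le (by positivity)
    _ = _ := by
        congr 1
        have h1 : η / (2 * ε) = (η / 2) / ε := by field_simp
        have h2 : ε ^ ((2 : ℝ) + δ) = ε ^ 2 * ε ^ δ := by
          rw [Real.rpow_add hε0, Real.rpow_two]
        have h3 : 0 < (η / 2) ^ ((2 : ℝ) + δ) := Real.rpow_pos_of_pos (by positivity) _
        rw [h1, Real.div_rpow (by positivity) hε0.le, h2]
        have h4 : 0 < ε ^ δ := Real.rpow_pos_of_pos hε0 _
        field_simp

end
end

section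
/- Finiteness of the double Riesz integral with capped correlations (from Appendix B): let d ∈ ℕ with d ≥ 3 and γ ∈ (2,∞). Then ∫_{ℝ^d} ∫_{ℝ^d} |x|^{1−d} |y|^{1−d} (max(|x−y|, 1))^{−γ} dx dy < ∞. (This is the integral bounding E[|S_α|²] uniformly in α in the construction of the stream matrix.) -/
open MeasureTheory

noncomputable section

/-- The radial profile used for the product domination. -/
def rieszG (p q t : ℝ) : ℝ := t ^ (-p) * max t 1 ^ (-q)

lemma rieszG_nonneg (p q : ℝ) {t : ℝ} (ht : 0 ≤ t) : 0 ≤ rieszG p q t := by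
  unfold rieszG; positivity

lemma riesz_key {p q : ℝ} (hq : 0 ≤ q) (hqp : q ≤ p) {a b c : ℝ}
    (ha : 0 < a) (hb : 0 < b) (hc : 0 < c) (hab : a ≤ b) :
    a ^ (-p) * b ^ (-p) * max c 1 ^ (-(2 * q)) ≤
      rieszG p q a * rieszG p q b + rieszG p q a * rieszG p q c := by
  have hMa : 0 < max a 1 := by positivity
  have hMb : 0 < max b 1 := by positivity
  have hMc : 0 < max c 1 := by positivity
  have hsq : max c 1 ^ (-(2 * q)) = max c 1 ^ (-q) * max c 1 ^ (-q) := by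
    rw [← Real.rpow_add hMc]; congr 1; ring
  have hGa := rieszG_nonneg p q ha.le
  have hGb := rieszG_nonneg p q hb.le
  have hGc := rieszG_nonneg p q hc.le
  rcases le_total b c with h | h
  · have h1 : max c 1 ^ (-q) ≤ max a 1 ^ (-q) :=
      Real.rpow_le_rpow_of_nonpos hMa (max_le_max (hab.trans h) le_rfl) (by linarith)
    have h2 : max c 1 ^ (-q) ≤ max b 1 ^ (-q) :=
      Real.rpow_le_rpow_of_nonpos hMb (max_le_max h le_rfl) (by linarith)
    have : a ^ (-p) * b ^ (-p) * max c 1 ^ (-(2 * q)) ≤ rieszG p q a * rieszG p q b := by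
      rw [hsq]; unfold rieszG
      calc a ^ (-p) * b ^ (-p) * (max c 1 ^ (-q) * max c 1 ^ (-q))
          ≤ a ^ (-p) * b ^ (-p) * (max a 1 ^ (-q) * max b 1 ^ (-q)) := by gcongr
        _ = _ := by ring
    nlinarith [mul_nonneg hGa hGc]
  · have hr : 1 ≤ b / c := (one_le_div hc).2 h
    have hMr : max b 1 ≤ b / c * max c 1 := by
      apply max_le
      · calc b = b / c * c := by field_simp
          _ ≤ _ := by gcongr; exact le_max_left _ _
      · nlinarith [le_max_right c 1]
    have h1 : max a 1 ^ q ≤ (b / c) ^ p * max c 1 ^ q := by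
      calc max a 1 ^ q ≤ (b / c * max c 1) ^ q :=
            Real.rpow_le_rpow hMa.le ((max_le_max hab le_rfl).trans hMr) hq
        _ = (b / c) ^ q * max c 1 ^ q := Real.mul_rpow (by positivity) (by positivity)
        _ ≤ _ := by gcongr
    have h2 : b ^ (-p) * max c 1 ^ (-q) ≤ c ^ (-p) * max a 1 ^ (-q) := by
      rw [Real.div_rpow hb.le hc.le] at h1
      rw [Real.rpow_neg hb.le, Real.rpow_neg hc.le, Real.rpow_neg hMa.le, Real.rpow_neg hMc.le,
        ← mul_inv, ← mul_inv]
      apply inv_anti₀ (by positivity)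
      have hcp : 0 < c ^ p := by positivity
      calc c ^ p * max a 1 ^ q ≤ c ^ p * (b ^ p / c ^ p * max c 1 ^ q) := by gcongr
        _ = _ := by field_simp
    have : a ^ (-p) * b ^ (-p) * max c 1 ^ (-(2 * q)) ≤ rieszG p q a * rieszG p q c := by
      rw [hsq]; unfold rieszG
      calc a ^ (-p) * b ^ (-p) * (max c 1 ^ (-q) * max c 1 ^ (-q))
          = a ^ (-p) * (b ^ (-p) * max c 1 ^ (-q)) * max c 1 ^ (-q) := by ring
        _ ≤ a ^ (-p) * (c ^ (-p) * max a 1 ^ (-q)) * max c 1 ^ (-q) := by gcongr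
        _ = _ := by ring
    nlinarith [mul_nonneg hGa hGb]

lemma riesz_key2 {p q : ℝ} (hq : 0 ≤ q) (hqp : q ≤ p) {a b c : ℝ}
    (ha : 0 < a) (hb : 0 < b) (hc : 0 < c) :
    a ^ (-p) * b ^ (-p) * max c 1 ^ (-(2 * q)) ≤
      rieszG p q a * rieszG p q b + rieszG p q a * rieszG p q c
        + rieszG p q b * rieszG p q c := by
  have hGa := rieszG_nonneg p q ha.le
  have hGb := rieszG_nonneg p q hb.le
  have hGc := rieszG_nonneg p q hc.le
  rcases le_total a b with h | h
  · have := riesz_key hq hqp ha hb hc h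
    nlinarith [mul_nonneg hGb hGc]
  · have := riesz_key hq hqp hb ha hc h
    nlinarith [mul_nonneg hGa hGc]

lemma rieszG_integrable (d : ℕ) (hd : 3 ≤ d) {q : ℝ} (hq : 1 < q) :
    Integrable (fun x : EuclideanSpace ℝ (Fin d) => rieszG ((d : ℝ) - 1) q ‖x‖) := by
  have : Nonempty (Fin d) := ⟨⟨0, by omega⟩⟩
  have : Nontrivial (EuclideanSpace ℝ (Fin d)) := inferInstance
  rw [integrable_fun_norm_addHaar (volume : Measure (EuclideanSpace ℝ (Fin d)))
    (f := rieszG ((d : ℝ) - 1) q)]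
  have hcong : ∀ y ∈ Set.Ioi (0 : ℝ), max y 1 ^ (-q) =
      y ^ (Module.finrank ℝ (EuclideanSpace ℝ (Fin d)) - 1) • rieszG ((d : ℝ) - 1) q y := by
    intro y hy
    have hy : 0 < y := hy
    have hc : ((d - 1 : ℕ) : ℝ) = (d : ℝ) - 1 := by
      rw [Nat.cast_sub (by omega)]; simp
    rw [finrank_euclideanSpace_fin, smul_eq_mul, rieszG, ← Real.rpow_natCast, ← mul_assoc,
      ← Real.rpow_add hy, hc]
    simp
  refine IntegrableOn.congr_fun ?_ hcong measurableSet_Ioi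
  rw [← Set.Ioc_union_Ioi_eq_Ioi (zero_le_one' ℝ)]
  refine IntegrableOn.union ?_ ?_
  · refine IntegrableOn.congr_fun (f := fun _ => (1 : ℝ)) ?_ ?_ measurableSet_Ioc
    · simp
    · intro y hy
      simp [max_eq_right hy.2]
  · refine IntegrableOn.congr_fun (integrableOn_Ioi_rpow_of_lt (a := -q) (by linarith) one_pos) ?_
      measurableSet_Ioi
    intro y hy
    simp [max_eq_left (le_of_lt hy : (1 : ℝ) ≤ y)]

/-- finiteness of the double Riesz integral with capped correlations,
Appendix B: for `d ≥ 3` and `γ ∈ (2,∞)`,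
`∫_{ℝ^d} ∫_{ℝ^d} |x|^{1−d} |y|^{1−d} (max(|x−y|, 1))^{−γ} dx dy < ∞`. -/
theorem double_riesz_integral_finite
    (d : ℕ) (hd : 3 ≤ d) (γ : ℝ) (hγ : 2 < γ) :
    (∫⁻ x : EuclideanSpace ℝ (Fin d), ∫⁻ y : EuclideanSpace ℝ (Fin d),
        ENNReal.ofReal
          (‖x‖ ^ (1 - (d : ℝ)) * ‖y‖ ^ (1 - (d : ℝ)) * max ‖x - y‖ 1 ^ (-γ))) < ⊤ := by
  have hd' : (3 : ℝ) ≤ d := by exact_mod_cast hd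
  have : Nonempty (Fin d) := ⟨⟨0, by omega⟩⟩
  have : Nontrivial (EuclideanSpace ℝ (Fin d)) := inferInstance
  obtain ⟨q, hq1, hq2, hqγ⟩ : ∃ q : ℝ, 1 < q ∧ q ≤ 2 ∧ 2 * q ≤ γ :=
    ⟨min (γ / 2) 2, lt_min (by linarith) (by norm_num), min_le_right _ _,
      by linarith [min_le_left (γ / 2) 2]⟩
  set G : EuclideanSpace ℝ (Fin d) → ENNReal :=
    fun x => ENNReal.ofReal (rieszG ((d : ℝ) - 1) q ‖x‖) with hG
  have hGm : Measurable G := by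
    rw [hG]; unfold rieszG; fun_prop
  have hGf : ∫⁻ x, G x < ⊤ := (rieszG_integrable d hd hq1).lintegral_lt_top
  set I := ∫⁻ x, G x with hI
  have key : (∫⁻ x : EuclideanSpace ℝ (Fin d), ∫⁻ y : EuclideanSpace ℝ (Fin d),
        ENNReal.ofReal
          (‖x‖ ^ (1 - (d : ℝ)) * ‖y‖ ^ (1 - (d : ℝ)) * max ‖x - y‖ 1 ^ (-γ))) ≤
      ∫⁻ x, ∫⁻ y, (G x * G y + G x * G (x - y) + G y * G (x - y)) := by
    refine lintegral_mono_ae ?_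
    filter_upwards [Measure.ae_ne volume (0 : EuclideanSpace ℝ (Fin d))] with x hx
    refine lintegral_mono_ae ?_
    filter_upwards [Measure.ae_ne volume (0 : EuclideanSpace ℝ (Fin d)),
      Measure.ae_ne volume x] with y hy hyx
    have ha : 0 < ‖x‖ := norm_pos_iff.2 hx
    have hb : 0 < ‖y‖ := norm_pos_iff.2 hy
    have hc : 0 < ‖x - y‖ := norm_pos_iff.2 (sub_ne_zero.2 (Ne.symm hyx))
    have hGa := rieszG_nonneg ((d : ℝ) - 1) q ha.le
    have hGb := rieszG_nonneg ((d : ℝ) - 1) q hb.le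
    have hGc := rieszG_nonneg ((d : ℝ) - 1) q hc.le
    simp only [hG]
    rw [← ENNReal.ofReal_mul hGa, ← ENNReal.ofReal_mul hGa, ← ENNReal.ofReal_mul hGb,
      ← ENNReal.ofReal_add (by positivity) (by positivity),
      ← ENNReal.ofReal_add (by positivity) (by positivity)]
    apply ENNReal.ofReal_le_ofReal
    refine le_trans ?_ (riesz_key2 (by linarith) (by linarith) ha hb hc)
    rw [neg_sub]
    gcongr
    exact le_max_right _ _
  refine key.trans_lt ?_
  have h3 : ∫⁻ x, ∫⁻ y, G y * G (x - y) = I * I := by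
    rw [lintegral_lintegral_swap (by fun_prop)]
    have : ∀ y, ∫⁻ x, G y * G (x - y) = G y * I := by
      intro y
      rw [lintegral_const_mul _ (by fun_prop), lintegral_sub_right_eq_self G y]
    simp_rw [this]
    rw [lintegral_mul_const _ hGm]
  have h12 : ∀ x, ∫⁻ y, (G x * G y + G x * G (x - y) + G y * G (x - y)) =
      G x * I + G x * I + ∫⁻ y, G y * G (x - y) := by
    intro x
    rw [lintegral_add_left (by fun_prop), lintegral_add_left (by fun_prop),
      lintegral_const_mul _ hGm, lintegral_const_mul _ (by fun_prop),
      lintegral_sub_left_eq_self G x]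
  simp_rw [h12]
  rw [lintegral_add_left (by fun_prop), lintegral_add_left (by fun_prop),
    lintegral_mul_const _ hGm, h3]
  have := ENNReal.mul_lt_top hGf hGf
  exact ENNReal.add_lt_top.2 ⟨ENNReal.add_lt_top.2 ⟨this, this⟩, this⟩

end
end
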